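/- arXiv:2603.27072 — 2 statements merged into one kernel-verified Lean document; each statement's English description precedes it below -/
import Mathlib

section
/- Let L ≥ 3 be an integer, λ > 0, q := 2/L, and let M♮ ∈ ℝ^{d_L × d_0} with r := min{d_0, d_L}. Suppose min_{1 ≤ i ≤ L−1} d_i ≥ min{d_0, d_L} and σ_i(M♮) ≠ τ for every i ∈ {1, …, r}, where τ := (1 − q/2)·λ^{1/(2−q)}·(1 − q)^{(q−1)/(2−q)}. Consider the ℓ²-regularized deep matrix factorization objective 𝓛(W_1, …, W_L) := ‖M♮ − W_L···W_1‖_F² + (λ/L)·Σ_{i=1}^L ‖W_i‖_F² with W_i ∈ ℝ^{d_i × d_{i−1}}. Then the function (w, i) ↦ ‖W_i‖_F is constant over the product of the set of global minimizers of 𝓛 and {1, …, L}; that is, for any two global minimizers (W*_1, …, W*_L) and (W'_1, …, W'_L) of 𝓛 and any layer indices i, j ∈ {1, …, L}, ‖W*_i‖_F = ‖W'_j‖_F. -/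
open Matrix

/-- The `i`-th largest singular value of a real matrix `A` (`0`-indexed),
i.e. the non-increasing rearrangement of the square roots of the
eigenvalues of the positive semidefinite matrix `Aᵀ A`. -/
noncomputable def singularValue {m n : ℕ} (A : Matrix (Fin m) (Fin n) ℝ) (i : Fin (min m n)) : ℝ :=
  let ev : Fin n → ℝ := fun j => Real.sqrt ((Matrix.isHermitian_conjTranspose_mul_self A).eigenvalues j)
  (ev ∘ Tuple.sort ev) ((Fin.castLE (Nat.min_le_right m n) i).rev)

/-- Frobenius norm of a real matrix. -/
noncomputable def frobNorm {m n : ℕ} (A : Matrix (Fin m) (Fin n) ℝ) : ℝ :=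
  Real.sqrt (∑ i, ∑ j, (A i j) ^ 2)

/-- `‖A‖_{S^q}^q = ∑_{i=1}^{min m n} σ_i(A)^q`. -/
noncomputable def schattenPow {m n : ℕ} (A : Matrix (Fin m) (Fin n) ℝ) (q : ℝ) : ℝ :=
  ∑ i : Fin (min m n), (singularValue A i) ^ q

/-- Schatten-`q` quasi-norm `‖A‖_{S^q} = (∑ σ_i(A)^q)^{1/q}`. -/
noncomputable def schattenNorm {m n : ℕ} (A : Matrix (Fin m) (Fin n) ℝ) (q : ℝ) : ℝ :=
  (schattenPow A q) ^ (1 / q)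

/-- `chainProd d W L = W_{L-1} * ⋯ * W_1 * W_0` (the end-to-end product of the
first `L` layers, `W_i : ℝ^{d_{i+1} × d_i}`). -/
noncomputable def chainProd (d : ℕ → ℕ) (W : ∀ i : ℕ, Matrix (Fin (d (i + 1))) (Fin (d i)) ℝ) :
    (L : ℕ) → Matrix (Fin (d L)) (Fin (d 0)) ℝ
  | 0 => 1
  | (L + 1) => W L * chainProd d W L

/-- The ℓ²-regularized deep matrix factorization objective
`𝓛(W) = ‖M♮ − W_L ⋯ W_1‖_F² + (λ/L) ∑ᵢ ‖W_i‖_F²`. -/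
noncomputable def deepLoss (L : ℕ) (lam : ℝ) (d : ℕ → ℕ)
    (Mnat : Matrix (Fin (d L)) (Fin (d 0)) ℝ)
    (W : ∀ i : ℕ, Matrix (Fin (d (i + 1))) (Fin (d i)) ℝ) : ℝ :=
  frobNorm (Mnat - chainProd d W L) ^ 2 + (lam / L) * ∑ i : Fin L, frobNorm (W i.1) ^ 2

/-- The Schatten-regularized objective
`𝓛_{M♮}(M) = ‖M♮ − M‖_F² + λ‖M‖_{S^{2/L}}^{2/L}`. -/
noncomputable def schattenLoss (L : ℕ) (lam : ℝ) {m n : ℕ}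
    (Mnat M : Matrix (Fin m) (Fin n) ℝ) : ℝ :=
  frobNorm (Mnat - M) ^ 2 + lam * schattenPow M (2 / L)

/-!
Let `W` be a global minimizer with product `P = W_L ⋯ W_1`. Stationarity in each layer shows that
consecutive layers are balanced, `W_{i+1}ᵀ W_{i+1} = W_i W_iᵀ`, so all layers have the same norm and
the same nonzero singular values, and that `(M♮ - P) Pᵀ` and `Pᵀ (M♮ - P)` are multiples of
`W_L W_Lᵀ` and `W_1ᵀ W_1`. Hence `W_1ᵀ W_1` commutes with `M♮ᵀ M♮`, and along a joint eigenvector,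
with eigenvalues `y²` and `s²`, the layers form a chain of singular vectors of singular value `y`.
For `y = 0` such a chain exists because the hidden layers are wide enough. Replacing `y` by any `z`
in all layers at once changes the loss to the one with `(s - z^L)² + λ z²` in place of
`(s - y^L)² + λ y²`, so `y^L` minimizes `(s - x)² + λ x^q` over `x ≥ 0`. This minimizer is unique
unless `s = τ`, so `W_1ᵀ W_1`, and with it the common norm of the layers, is determined by `M♮`.
-/

/-- The scalar objective `(s - x)² + λ x^q` on `x ≥ 0`. For `q = 2 / L` and `x = z ^ L` it is the
loss of the depth-`L` factorization along one singular direction of `M♮` with singular value `s`,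
when all layers have singular value `z` there. -/
noncomputable def scalarLoss (q lam s x : ℝ) : ℝ :=
  (s - x) ^ 2 + lam * x ^ q

/-- The threshold `τ`: for `0 < q < 1`, the only `s` for which `scalarLoss q lam s` may have two
minimizers on `[0, ∞)`. -/
noncomputable def threshold (q lam : ℝ) : ℝ :=
  (1 - q / 2) * lam ^ (1 / (2 - q)) * (1 - q) ^ ((q - 1) / (2 - q))

section Scalar

variable {q lam s x y z : ℝ}

lemma two_mul_mul_sub_eq_of_isMinOn_scalarLoss (hq : 0 < q) (hx : 0 ≤ x)
    (hmin : IsMinOn (scalarLoss q lam s) (Set.Ici 0) x) :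
    2 * x * (s - x) = lam * q * x ^ q := by
  rcases hx.eq_or_lt with rfl | hx
  · simp [Real.zero_rpow hq.ne']
  have hderiv : HasDerivAt (scalarLoss q lam s)
      (-(2 * (s - x)) + lam * (q * x ^ (q - 1))) x := by
    refine ((((hasDerivAt_id x).const_sub s).pow 2).add
      ((Real.hasDerivAt_rpow_const (Or.inl hx.ne')).const_mul lam)).congr_deriv ?_
    simp
  have hzero := (hmin.isLocalMin (Ici_mem_nhds hx)).hasDerivAt_eq_zero hderiv
  have hpow : x ^ q = x ^ (q - 1) * x := by
    rw [← Real.rpow_add_one hx.ne', sub_add_cancel]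
  rw [hpow]
  linear_combination -x * hzero

lemma scalarLoss_eq_of_isMinOn (hq : 0 < q) (hx : 0 ≤ x)
    (hmin : IsMinOn (scalarLoss q lam s) (Set.Ici 0) x) :
    scalarLoss q lam s x = s ^ 2 + (lam * (1 - q) * x ^ q - x ^ 2) := by
  rw [scalarLoss]
  linear_combination -two_mul_mul_sub_eq_of_isMinOn_scalarLoss hq hx hmin

lemma mul_rpow_sub_sq_lt_of_le (hq : 0 < q) (hq2 : q < 2) {c : ℝ} (hy : 0 < y) (hyz : y < z)
    (hcy : c * y ^ q ≤ y ^ 2) : c * z ^ q - z ^ 2 < c * y ^ q - y ^ 2 := by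
  have sq_eq {t : ℝ} (ht : 0 < t) : t ^ 2 = t ^ (2 - q) * t ^ q := by
    rw [← Real.rpow_add ht, sub_add_cancel, Real.rpow_two]
  have hyq : 0 < y ^ q := Real.rpow_pos_of_pos hy q
  rw [sq_eq hy, mul_le_mul_iff_left₀ hyq] at hcy
  have hpow : y ^ q < z ^ q := Real.rpow_lt_rpow hy.le hyz hq
  have hpow' : y ^ (2 - q) < z ^ (2 - q) := Real.rpow_lt_rpow hy.le hyz (by linarith)
  rw [sq_eq hy, sq_eq (hy.trans hyz), ← sub_mul, ← sub_mul]
  nlinarith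

lemma threshold_pos (hlam : 0 < lam) (hq1 : q < 1) : 0 < threshold q lam := by
  rw [threshold]
  have : 0 < 1 - q := by linarith
  have : 0 < 1 - q / 2 := by linarith
  positivity

-- The nonzero critical value equals the value at `0` only for `x^(2-q) = λ(1 - q)`, and the
-- critical equation then reads `s = x (1 - q/2) / (1 - q)`.
lemma eq_threshold_of_mul_rpow_eq_sq (hlam : 0 ≤ lam) (hq1 : q < 1) (hx : 0 < x)
    (hcrit : 2 * x * (s - x) = lam * q * x ^ q) (hval : lam * (1 - q) * x ^ q = x ^ 2) :
    s = threshold q lam := by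
  have hq1' : 0 < 1 - q := by linarith
  have hq2 : 2 - q ≠ 0 := by linarith
  have hxpow : x ^ (2 - q) = lam * (1 - q) := by
    rw [Real.rpow_sub hx, Real.rpow_two, ← hval,
      mul_div_cancel_right₀ _ (Real.rpow_pos_of_pos hx q).ne']
  have hx_eq : x = lam ^ (1 / (2 - q)) * (1 - q) ^ (1 / (2 - q)) := by
    rw [← Real.mul_rpow hlam hq1'.le, ← hxpow, ← Real.rpow_mul hx.le,
      mul_one_div_cancel hq2, Real.rpow_one]
  have hexp : (q - 1) / (2 - q) = 1 / (2 - q) - 1 := by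
    field_simp
    ring
  have hs : s = (1 - q / 2) * (x / (1 - q)) := by
    have : 2 * x * ((1 - q) * s) = 2 * x * ((1 - q / 2) * x) := by
      linear_combination (1 - q) * hcrit + q * hval
    have := mul_left_cancel₀ (by positivity : 2 * x ≠ 0) this
    field_simp
    linarith
  rw [threshold, hs, hexp, Real.rpow_sub_one hq1'.ne', hx_eq]
  ring

lemma not_lt_of_isMinOn_scalarLoss (hlam : 0 ≤ lam) (hq : 0 < q) (hq1 : q < 1)
    (hs : s ≠ threshold q lam)
    (hy : 0 ≤ y) (hymin : IsMinOn (scalarLoss q lam s) (Set.Ici 0) y)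
    (hzmin : IsMinOn (scalarLoss q lam s) (Set.Ici 0) z) : ¬ y < z := by
  intro hyz
  have hz : 0 < z := hy.trans_lt hyz
  have hyval := scalarLoss_eq_of_isMinOn hq hy hymin
  have hzval := scalarLoss_eq_of_isMinOn hq hz.le hzmin
  have heq : scalarLoss q lam s y = scalarLoss q lam s z :=
    le_antisymm (hymin hz.le) (hzmin hy)
  rcases hy.eq_or_lt with rfl | hy
  · refine hs (eq_threshold_of_mul_rpow_eq_sq hlam hq1 hz
      (two_mul_mul_sub_eq_of_isMinOn_scalarLoss hq hz.le hzmin) ?_)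
    rw [Real.zero_rpow hq.ne'] at hyval
    linarith
  · have hle : scalarLoss q lam s y ≤ scalarLoss q lam s 0 := hymin (Set.mem_Ici.2 le_rfl)
    have hzero : scalarLoss q lam s 0 = s ^ 2 := by
      simp [scalarLoss, Real.zero_rpow hq.ne']
    have := mul_rpow_sub_sq_lt_of_le hq (by linarith) (c := lam * (1 - q)) hy hyz (by linarith)
    linarith

lemma eq_of_isMinOn_scalarLoss (hlam : 0 ≤ lam) (hq : 0 < q) (hq1 : q < 1)
    (hs : s ≠ threshold q lam)
    (hy : 0 ≤ y) (hz : 0 ≤ z) (hymin : IsMinOn (scalarLoss q lam s) (Set.Ici 0) y)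
    (hzmin : IsMinOn (scalarLoss q lam s) (Set.Ici 0) z) : y = z :=
  le_antisymm (not_lt.1 (not_lt_of_isMinOn_scalarLoss hlam hq hq1 hs hz hzmin hymin))
    (not_lt.1 (not_lt_of_isMinOn_scalarLoss hlam hq hq1 hs hy hymin hzmin))

lemma scalarLoss_pow {L : ℕ} (hL : L ≠ 0) (hx : 0 ≤ x) :
    scalarLoss (2 / L) lam s (x ^ L) = (s - x ^ L) ^ 2 + lam * x ^ 2 := by
  rw [scalarLoss, ← Real.rpow_natCast_mul hx, mul_div_cancel₀ _ (Nat.cast_ne_zero.2 hL),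
    Real.rpow_two]

lemma isMinOn_scalarLoss_pow {L : ℕ} (hL : L ≠ 0) (hy : 0 ≤ y)
    (h : ∀ z, (s - y ^ L) ^ 2 + lam * y ^ 2 ≤ (s - z ^ L) ^ 2 + lam * z ^ 2) :
    IsMinOn (scalarLoss (2 / L) lam s) (Set.Ici 0) (y ^ L) := by
  refine isMinOn_iff.2 fun x hx => ?_
  have hroot : 0 ≤ x ^ (L⁻¹ : ℝ) := Real.rpow_nonneg hx _
  rw [← Real.rpow_inv_natCast_pow hx hL, scalarLoss_pow hL hy, scalarLoss_pow hL hroot]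
  exact h _

end Scalar

section Eigenspaces

open Module.End

variable {𝕜 E : Type*} [RCLike 𝕜] [NormedAddCommGroup E] [InnerProductSpace 𝕜 E]
  [FiniteDimensional 𝕜 E] {A B B' : E →ₗ[𝕜] E}

lemma eigenspace_le_eigenspace_of_commute (hB : B.IsSymmetric) (hAB : Commute A B) {μ b : 𝕜}
    (h : ∀ c, eigenspace A μ ⊓ eigenspace B c ≠ ⊥ → c = b) :
    eigenspace A μ ≤ eigenspace B b := by
  rw [← LinearMap.IsSymmetric.iSup_eigenspace_inf_eigenspace_of_commute hB hAB]
  refine iSup_le fun c => ?_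
  by_cases hc : eigenspace A μ ⊓ eigenspace B c = ⊥
  · simp [hc]
  · exact h c hc ▸ inf_le_right

lemma eq_of_commute_of_eigenspace_inf_ne_bot (hA : A.IsSymmetric) (hB : B.IsSymmetric)
    (hB' : B'.IsSymmetric) (hAB : Commute A B) (hAB' : Commute A B')
    (h : ∀ μ b b', eigenspace A μ ⊓ eigenspace B b ≠ ⊥ → eigenspace A μ ⊓ eigenspace B' b' ≠ ⊥ →
      b = b') :
    B = B' := by
  rw [← LinearMap.eqLocus_eq_top, eq_top_iff,
    ← hA.iSup_iSup_eigenspace_inf_eigenspace_eq_top_of_commute hB hAB]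
  refine iSup₂_le fun μ b => ?_
  by_cases hb : eigenspace A μ ⊓ eigenspace B b = ⊥
  · simp [hb]
  have hle : eigenspace A μ ≤ eigenspace B' b :=
    eigenspace_le_eigenspace_of_commute hB' hAB' fun c hc => (h μ b c hb hc).symm
  intro v hv
  rw [LinearMap.mem_eqLocus, mem_eigenspace_iff.1 hv.2, mem_eigenspace_iff.1 (hle hv.1)]

end Eigenspaces

section RealMatrix

variable {m n : Type*} [Fintype n]

lemma ne_zero_of_dotProduct_self_eq_one {v : n → ℝ} (hv : v ⬝ᵥ v = 1) : v ≠ 0 := by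
  rintro rfl
  simp at hv

lemma exists_smul_dotProduct_smul_eq_one {v : n → ℝ} (hv : v ≠ 0) :
    ∃ a : ℝ, (a • v) ⬝ᵥ (a • v) = 1 := by
  have hpos : 0 < v ⬝ᵥ v := by simpa using dotProduct_star_self_pos_iff.2 hv
  refine ⟨(√(v ⬝ᵥ v))⁻¹, ?_⟩
  rw [smul_dotProduct, dotProduct_smul, smul_smul, ← mul_inv, Real.mul_self_sqrt hpos.le,
    smul_eq_mul, inv_mul_cancel₀ hpos.ne']

lemma exists_unit_of_eigenspace_toEuclideanLin_inf_ne_bot [DecidableEq n] {A B : Matrix n n ℝ}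
    {μ b : ℝ} (h : Module.End.eigenspace (toEuclideanLin A) μ ⊓
      Module.End.eigenspace (toEuclideanLin B) b ≠ ⊥) :
    ∃ v : n → ℝ, v ⬝ᵥ v = 1 ∧ A *ᵥ v = μ • v ∧ B *ᵥ v = b • v := by
  obtain ⟨x, ⟨hxA, hxB⟩, hx⟩ := Submodule.exists_mem_ne_zero_of_ne_bot h
  have hA : A *ᵥ x.ofLp = μ • x.ofLp := congrArg WithLp.ofLp (Module.End.mem_eigenspace_iff.1 hxA)
  have hB : B *ᵥ x.ofLp = b • x.ofLp := congrArg WithLp.ofLp (Module.End.mem_eigenspace_iff.1 hxB)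
  obtain ⟨a, ha⟩ := exists_smul_dotProduct_smul_eq_one (v := x.ofLp) (by simpa using hx)
  exact ⟨a • x.ofLp, ha, by rw [mulVec_smul, hA, smul_comm], by rw [mulVec_smul, hB, smul_comm]⟩

lemma eq_of_commute_of_unit_eigenvectors {A B B' : Matrix n n ℝ} (hA : A.IsSymm)
    (hB : B.IsSymm) (hB' : B'.IsSymm) (hAB : Commute A B) (hAB' : Commute A B')
    (h : ∀ (μ b b' : ℝ) (v v' : n → ℝ), v ⬝ᵥ v = 1 → A *ᵥ v = μ • v → B *ᵥ v = b • v →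
      v' ⬝ᵥ v' = 1 → A *ᵥ v' = μ • v' → B' *ᵥ v' = b' • v' → b = b') :
    B = B' := by
  classical
  have isSymmetric {C : Matrix n n ℝ} (hC : C.IsSymm) : (toEuclideanLin C).IsSymmetric :=
    isSymmetric_toEuclideanLin_iff.2 ((conjTranspose_eq_transpose_of_trivial C).trans hC)
  have commute {C : Matrix n n ℝ} (hC : Commute A C) :
      Commute (toEuclideanLin A) (toEuclideanLin C) := by
    ext v i
    simp [mulVec_mulVec, hC.eq]
  apply toEuclideanLin.injective
  refine eq_of_commute_of_eigenspace_inf_ne_bot (isSymmetric hA) (isSymmetric hB) (isSymmetric hB')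
    (commute hAB) (commute hAB') fun μ b b' hb hb' => ?_
  obtain ⟨v, hv, hAv, hBv⟩ := exists_unit_of_eigenspace_toEuclideanLin_inf_ne_bot hb
  obtain ⟨v', hv', hAv', hBv'⟩ := exists_unit_of_eigenspace_toEuclideanLin_inf_ne_bot hb'
  exact h μ b b' v v' hv hAv hBv hv' hAv' hBv'

lemma rank_lt_card_iff_exists_mulVec_eq_zero {K : Type*} [Field K] (A : Matrix m n K) :
    A.rank < Fintype.card n ↔ ∃ v ≠ 0, A *ᵥ v = 0 := by
  have hrank : A.rank + Module.finrank K (LinearMap.ker A.mulVecLin) = Fintype.card n := by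
    rw [rank, LinearMap.finrank_range_add_finrank_ker, Module.finrank_fintype_fun_eq_card]
  calc A.rank < Fintype.card n ↔ Module.finrank K (LinearMap.ker A.mulVecLin) ≠ 0 := by omega
    _ ↔ LinearMap.ker A.mulVecLin ≠ ⊥ := Submodule.finrank_eq_zero.not
    _ ↔ ∃ v ≠ 0, A *ᵥ v = 0 := by simp [Submodule.ne_bot_iff, and_comm]

lemma exists_unit_mulVec_eq_zero_of_rank_lt {A : Matrix m n ℝ} (h : A.rank < Fintype.card n) :
    ∃ v : n → ℝ, v ⬝ᵥ v = 1 ∧ A *ᵥ v = 0 := by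
  obtain ⟨v, hv, hAv⟩ := (rank_lt_card_iff_exists_mulVec_eq_zero A).1 h
  obtain ⟨a, ha⟩ := exists_smul_dotProduct_smul_eq_one hv
  exact ⟨a • v, ha, by rw [mulVec_smul, hAv, smul_zero]⟩

variable [Fintype m]

lemma transpose_mul_self_mulVec_eq_zero_iff (A : Matrix m n ℝ) (v : n → ℝ) :
    (Aᵀ * A) *ᵥ v = 0 ↔ A *ᵥ v = 0 := by
  rw [← conjTranspose_eq_transpose_of_trivial, conjTranspose_mul_self_mulVec_eq_zero]

lemma mulVec_dotProduct_mulVec_self_of_eigenvector {A : Matrix m n ℝ} {v : n → ℝ} {b : ℝ}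
    (hv : v ⬝ᵥ v = 1) (h : (Aᵀ * A) *ᵥ v = b • v) : (A *ᵥ v) ⬝ᵥ (A *ᵥ v) = b := by
  rw [dotProduct_mulVec, ← mulVec_transpose, mulVec_mulVec, h, smul_dotProduct, hv, smul_eq_mul,
    mul_one]

lemma nonneg_of_eigenvector_transpose_mul_self {A : Matrix m n ℝ} {v : n → ℝ} {b : ℝ}
    (hv : v ⬝ᵥ v = 1) (h : (Aᵀ * A) *ᵥ v = b • v) : 0 ≤ b := by
  rw [← mulVec_dotProduct_mulVec_self_of_eigenvector hv h]
  simpa using dotProduct_star_self_nonneg (A *ᵥ v)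

end RealMatrix

section Gram

variable {m n R : Type*} [Fintype m] [CommRing R]

lemma isSymm_transpose_mul_self_rect (A : Matrix m n R) : (Aᵀ * A).IsSymm := by
  rw [IsSymm, transpose_mul, transpose_transpose]

lemma transpose_mul_comm_of_isSymm_mul_sub {A B : Matrix m n R}
    (h : (Bᵀ * (A - B)).IsSymm) : Bᵀ * A = Aᵀ * B := by
  have hsymm := h.add (isSymm_transpose_mul_self_rect B)
  rw [← Matrix.mul_add, sub_add_cancel] at hsymm
  rw [← hsymm.eq, transpose_mul, transpose_transpose]

variable [Fintype n] in
lemma commute_transpose_mul_sub {A B : Matrix m n R} (hAB : A * Bᵀ = B * Aᵀ)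
    (hBA : Bᵀ * A = Aᵀ * B) : Commute (Aᵀ * A) (Bᵀ * (A - B)) := by
  have hcross : Commute (Aᵀ * A) (Bᵀ * A) := by
    calc Aᵀ * A * (Bᵀ * A) = Aᵀ * (A * Bᵀ) * A := by simp only [Matrix.mul_assoc]
      _ = Bᵀ * A * (Aᵀ * A) := by rw [hAB, hBA]; simp only [Matrix.mul_assoc]
  have hself : Commute (Aᵀ * A) (Bᵀ * B) := by
    calc Aᵀ * A * (Bᵀ * B) = Aᵀ * (A * Bᵀ) * B := by simp only [Matrix.mul_assoc]
      _ = Aᵀ * B * (Aᵀ * B) := by rw [hAB]; simp only [Matrix.mul_assoc]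
      _ = Bᵀ * (A * Bᵀ) * A := by rw [← hBA]; simp only [Matrix.mul_assoc]
      _ = Bᵀ * B * (Aᵀ * A) := by rw [hAB]; simp only [Matrix.mul_assoc]
  rw [Matrix.mul_sub]
  exact hcross.sub_right hself

end Gram

section SingularValue

lemma rev_lt_card_ne_zero_of_sort_pos {n : ℕ} {f : Fin n → ℝ} {k : Fin n}
    (hk : 0 < f (Tuple.sort f k)) : (k.rev : ℕ) < Fintype.card {i // f i ≠ 0} := by
  have hcard : (Finset.Ici k).card ≤ (Finset.univ.filter fun i => f i ≠ 0).card :=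
    Finset.card_le_card_of_injOn (Tuple.sort f)
      (fun i hi => by simpa using
        (hk.trans_le (Tuple.monotone_sort f (Finset.mem_Ici.1 hi))).ne')
      (Tuple.sort f).injective.injOn
  rw [Fin.card_Ici, ← Fintype.card_subtype] at hcard
  rw [Fin.val_rev]
  omega

lemma exists_eigenvalues_eq_of_mulVec_eq_smul {n : Type*} [Fintype n] [DecidableEq n]
    {A : Matrix n n ℝ} (hA : A.IsHermitian) {v : n → ℝ} (hv : v ≠ 0) {μ : ℝ}
    (h : A *ᵥ v = μ • v) : ∃ j, hA.eigenvalues j = μ := by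
  have hvec : Module.End.HasEigenvector (toLin' A) μ v :=
    ⟨Module.End.mem_eigenspace_iff.2 (by rw [toLin'_apply, h]), hv⟩
  have hmem := (Module.End.hasEigenvalue_of_hasEigenvector hvec).mem_spectrum
  rwa [spectrum_toLin', hA.spectrum_real_eq_range_eigenvalues] at hmem

lemma exists_singularValue_eq_sqrt {m n : ℕ} {A : Matrix (Fin m) (Fin n) ℝ} {v : Fin n → ℝ}
    (hv : v ≠ 0) {μ : ℝ} (hμ : 0 < μ) (h : (Aᵀ * A) *ᵥ v = μ • v) :
    ∃ i, singularValue A i = √μ := by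
  set hA := isHermitian_conjTranspose_mul_self A
  set ev : Fin n → ℝ := fun j => √(hA.eigenvalues j)
  obtain ⟨j, hj⟩ := exists_eigenvalues_eq_of_mulVec_eq_smul hA hv
    (by rw [conjTranspose_eq_transpose_of_trivial, h])
  set k := (Tuple.sort ev).symm j
  have hk : ev (Tuple.sort ev k) = √μ :=
    (congrArg ev ((Tuple.sort ev).apply_symm_apply j)).trans (congrArg Real.sqrt hj)
  have hrank : Fintype.card {i // ev i ≠ 0} ≤ m := by
    calc Fintype.card {i // ev i ≠ 0} ≤ Fintype.card {i // hA.eigenvalues i ≠ 0} :=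
          Fintype.card_subtype_mono _ _ fun i hi h0 =>
            hi ((congrArg Real.sqrt h0).trans Real.sqrt_zero)
      _ = A.rank := by
        rw [← hA.rank_eq_card_non_zero_eigs, rank_conjTranspose_mul_self]
      _ ≤ m := A.rank_le_height
  have hlt : (k.rev : ℕ) < min m n :=
    lt_min ((rev_lt_card_ne_zero_of_sort_pos (hk ▸ Real.sqrt_pos.2 hμ)).trans_le hrank) k.rev.2
  refine ⟨⟨k.rev, hlt⟩, ?_⟩
  change ev (Tuple.sort ev (k.rev.rev)) = √μ
  rw [Fin.rev_rev, hk]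

lemma sqrt_ne_of_forall_singularValue_ne {m n : ℕ} {A : Matrix (Fin m) (Fin n) ℝ}
    {v : Fin n → ℝ} {μ τ : ℝ} (hτ : 0 < τ) (hσ : ∀ i, singularValue A i ≠ τ) (hv : v ⬝ᵥ v = 1)
    (hA : (Aᵀ * A) *ᵥ v = μ • v) : √μ ≠ τ := by
  rintro rfl
  obtain ⟨i, hi⟩ := exists_singularValue_eq_sqrt (ne_zero_of_dotProduct_self_eq_one hv)
    (Real.sqrt_pos.1 hτ) hA
  exact hσ i hi

end SingularValue

section Frobenius

variable {m n : ℕ}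

lemma frobNorm_sq (A : Matrix (Fin m) (Fin n) ℝ) : frobNorm A ^ 2 = trace (Aᵀ * A) := by
  rw [frobNorm, Real.sq_sqrt (by positivity), Finset.sum_comm]
  simp only [trace, diag, mul_apply, transpose_apply, sq]

lemma frobNorm_sq_add_smul (A B : Matrix (Fin m) (Fin n) ℝ) (t : ℝ) :
    frobNorm (A + t • B) ^ 2
      = frobNorm A ^ 2 + 2 * t * trace (Aᵀ * B) + t ^ 2 * frobNorm B ^ 2 := by
  have hsymm : trace (Bᵀ * A) = trace (Aᵀ * B) := by
    rw [← trace_transpose, transpose_mul, transpose_transpose]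
  simp only [frobNorm_sq, transpose_add, transpose_smul, Matrix.add_mul, Matrix.mul_add, trace_add,
    Matrix.smul_mul, Matrix.mul_smul, trace_smul, smul_eq_mul, hsymm]
  ring

lemma trace_transpose_mul_vecMulVec (A : Matrix (Fin m) (Fin n) ℝ) (u : Fin m → ℝ)
    (v : Fin n → ℝ) : trace (Aᵀ * vecMulVec u v) = (Aᵀ *ᵥ u) ⬝ᵥ v := by
  rw [mul_vecMulVec, trace_vecMulVec]

lemma frobNorm_sq_vecMulVec (u : Fin m → ℝ) (v : Fin n → ℝ) :
    frobNorm (vecMulVec u v) ^ 2 = (u ⬝ᵥ u) * (v ⬝ᵥ v) := by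
  rw [frobNorm_sq, trace_transpose_mul_vecMulVec, transpose_vecMulVec, vecMulVec_mulVec]
  simp [smul_dotProduct]

end Frobenius

section ChainProd

variable {d : ℕ → ℕ} (W : ∀ i : ℕ, Matrix (Fin (d (i + 1))) (Fin (d i)) ℝ)

lemma chainProd_succ (k : ℕ) : chainProd d W (k + 1) = W k * chainProd d W k := rfl

lemma chainProd_update_of_le {i k : ℕ} (A : Matrix (Fin (d (i + 1))) (Fin (d i)) ℝ) (hk : k ≤ i) :
    chainProd d (Function.update W i A) k = chainProd d W k := by
  induction k with
  | zero => rfl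
  | succ k ih =>
    rw [chainProd_succ, chainProd_succ, ih (by omega), Function.update_of_ne (by omega)]

lemma chainProd_update_self (i : ℕ) (A : Matrix (Fin (d (i + 1))) (Fin (d i)) ℝ) :
    chainProd d (Function.update W i A) (i + 1) = A * chainProd d W i := by
  rw [chainProd_succ, Function.update_self, chainProd_update_of_le W A le_rfl]

lemma chainProd_update_add_smul {i k : ℕ} (A B : Matrix (Fin (d (i + 1))) (Fin (d i)) ℝ) (t : ℝ)
    (hk : i < k) :
    chainProd d (Function.update W i (A + t • B)) k
      = chainProd d (Function.update W i A) k + t • chainProd d (Function.update W i B) k := by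
  induction k, hk using Nat.le_induction with
  | base => simp only [chainProd_update_self, Matrix.add_mul, Matrix.smul_mul]
  | succ k hk ih =>
    have hne : k ≠ i := by omega
    simp only [chainProd_succ, Function.update_of_ne hne, ih, Matrix.mul_add, Matrix.mul_smul]

lemma chainProd_update_mul_left {i k : ℕ} (E : Matrix (Fin (d (i + 1))) (Fin (d (i + 1))) ℝ)
    (hk : i + 1 < k) :
    chainProd d (Function.update W i (E * W i)) k
      = chainProd d (Function.update W (i + 1) (W (i + 1) * E)) k := by
  induction k, hk using Nat.le_induction with
  | base =>
    rw [chainProd_update_self, chainProd_succ, chainProd_update_self, chainProd_succ,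
      Function.update_of_ne (by omega)]
    simp only [Matrix.mul_assoc]
  | succ k hk ih =>
    rw [chainProd_succ, chainProd_succ, ih, Function.update_of_ne (by omega),
      Function.update_of_ne (by omega)]

lemma chainProd_update_zero_mul_right (E : Matrix (Fin (d 0)) (Fin (d 0)) ℝ) (k : ℕ) :
    chainProd d (Function.update W 0 (W 0 * E)) (k + 1) = chainProd d W (k + 1) * E := by
  induction k with
  | zero => simp [chainProd]
  | succ k ih =>
    rw [chainProd_succ, ih, Function.update_of_ne (by omega), chainProd_succ W (k + 1),
      Matrix.mul_assoc]

variable {W} in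
lemma chainProd_succ_mulVec_eq_zero {v : Fin (d 0) → ℝ} (hv : W 0 *ᵥ v = 0) (k : ℕ) :
    chainProd d W (k + 1) *ᵥ v = 0 := by
  induction k with
  | zero => simpa [chainProd] using hv
  | succ k ih => rw [chainProd_succ, ← mulVec_mulVec, ih, mulVec_zero]

lemma sum_frobNorm_sq_update {L i : ℕ} (hi : i < L)
    (A : Matrix (Fin (d (i + 1))) (Fin (d i)) ℝ) :
    ∑ k : Fin L, frobNorm (Function.update W i A k) ^ 2
      = ∑ k : Fin L, frobNorm (W k) ^ 2 + (frobNorm A ^ 2 - frobNorm (W i) ^ 2) := by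
  rw [← sub_eq_iff_eq_add', ← Finset.sum_sub_distrib, Finset.sum_eq_single ⟨i, hi⟩]
  · rw [Function.update_self]
  · intro k _ hk
    rw [Function.update_of_ne fun h => hk (Fin.ext h), sub_self]
  · simp

end ChainProd

section Stationarity

variable {L : ℕ} {lam : ℝ} {d : ℕ → ℕ} {M : Matrix (Fin (d L)) (Fin (d 0)) ℝ}
  {W : ∀ i : ℕ, Matrix (Fin (d (i + 1))) (Fin (d i)) ℝ}

lemma deepLoss_update_add_smul {i : ℕ} (hi : i < L)
    (H : Matrix (Fin (d (i + 1))) (Fin (d i)) ℝ) (t : ℝ) :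
    deepLoss L lam d M (Function.update W i (W i + t • H)) = deepLoss L lam d M W
      + 2 * t * (lam / L * trace ((W i)ᵀ * H)
        - trace ((M - chainProd d W L)ᵀ * chainProd d (Function.update W i H) L))
      + t ^ 2 * (frobNorm (chainProd d (Function.update W i H) L) ^ 2
        + lam / L * frobNorm H ^ 2) := by
  have hres : M - (chainProd d W L + t • chainProd d (Function.update W i H) L)
      = (M - chainProd d W L) + (-t) • chainProd d (Function.update W i H) L := by
    rw [neg_smul, ← sub_sub, sub_eq_add_neg]
  rw [deepLoss, chainProd_update_add_smul W _ _ _ hi, Function.update_eq_self, hres,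
    sum_frobNorm_sq_update W hi, frobNorm_sq_add_smul, frobNorm_sq_add_smul, deepLoss]
  ring

lemma trace_residual_mul_chainProd_update_of_isMinOn
    (hW : IsMinOn (deepLoss L lam d M) Set.univ W) {i : ℕ} (hi : i < L)
    (H : Matrix (Fin (d (i + 1))) (Fin (d i)) ℝ) :
    trace ((M - chainProd d W L)ᵀ * chainProd d (Function.update W i H) L)
      = lam / L * trace ((W i)ᵀ * H) := by
  set slope := lam / L * trace ((W i)ᵀ * H)
    - trace ((M - chainProd d W L)ᵀ * chainProd d (Function.update W i H) L) with hslope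
  have hdiscrim := discrim_le_zero
    (a := frobNorm (chainProd d (Function.update W i H) L) ^ 2 + lam / L * frobNorm H ^ 2)
    (b := 2 * slope) (c := 0) fun t => by
    have hle := isMinOn_univ_iff.1 hW (Function.update W i (W i + t • H))
    rw [deepLoss_update_add_smul hi, ← hslope] at hle
    linear_combination hle
  have hsq : slope ^ 2 ≤ 0 := by
    rw [discrim] at hdiscrim
    linarith
  linarith [pow_eq_zero_iff two_ne_zero |>.1 (hsq.antisymm (sq_nonneg slope))]

/-- Consecutive layers are balanced: the Gram matrix of the rows of `W i` is that of the columns of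
`W (i + 1)`, for the first `L` layers. It forces all layers to share their nonzero singular
values. -/
def IsBalanced (d : ℕ → ℕ) (W : ∀ i : ℕ, Matrix (Fin (d (i + 1))) (Fin (d i)) ℝ) (L : ℕ) : Prop :=
  ∀ i, i + 1 < L → (W (i + 1))ᵀ * W (i + 1) = W i * (W i)ᵀ

-- Inserting `E` between layers `i` and `i + 1` may be read as a variation of either layer.
lemma isBalanced_of_isMinOn (hlam : lam ≠ 0) (hW : IsMinOn (deepLoss L lam d M) Set.univ W) :
    IsBalanced d W L := by
  intro i hi
  rw [ext_iff_trace_mul_right]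
  intro E
  have hlower :=
    trace_residual_mul_chainProd_update_of_isMinOn hW (by omega) (E * W i)
  have hupper :=
    trace_residual_mul_chainProd_update_of_isMinOn hW hi (W (i + 1) * E)
  rw [chainProd_update_mul_left W E hi, hupper] at hlower
  have hcoef : lam / (L : ℝ) ≠ 0 := div_ne_zero hlam (Nat.cast_ne_zero.2 (by omega))
  have htrace := mul_left_cancel₀ hcoef hlower
  rw [Matrix.mul_assoc, htrace, trace_mul_comm, Matrix.mul_assoc, trace_mul_comm]

end Stationarity

section EndToEnd

variable {n : ℕ} {lam : ℝ} {d : ℕ → ℕ} {M : Matrix (Fin (d (n + 1))) (Fin (d 0)) ℝ}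
  {W : ∀ i : ℕ, Matrix (Fin (d (i + 1))) (Fin (d i)) ℝ}

lemma residual_mul_transpose_chainProd_of_isMinOn
    (hW : IsMinOn (deepLoss (n + 1) lam d M) Set.univ W) :
    (M - chainProd d W (n + 1)) * (chainProd d W (n + 1))ᵀ
      = (lam / (n + 1 : ℕ)) • (W n * (W n)ᵀ) := by
  rw [← transpose_inj, ext_iff_trace_mul_right]
  intro E
  have hstat := trace_residual_mul_chainProd_update_of_isMinOn hW n.lt_succ_self (E * W n)
  rw [chainProd_update_self, Matrix.mul_assoc, ← chainProd_succ] at hstat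
  simp only [transpose_mul, transpose_smul, transpose_transpose, Matrix.smul_mul, trace_smul,
    smul_eq_mul]
  rw [Matrix.mul_assoc, trace_mul_comm, Matrix.mul_assoc, hstat, ← Matrix.mul_assoc,
    trace_mul_comm, Matrix.mul_assoc]

lemma transpose_chainProd_mul_residual_of_isMinOn
    (hW : IsMinOn (deepLoss (n + 1) lam d M) Set.univ W) :
    (chainProd d W (n + 1))ᵀ * (M - chainProd d W (n + 1))
      = (lam / (n + 1 : ℕ)) • ((W 0)ᵀ * W 0) := by
  rw [← transpose_inj, ext_iff_trace_mul_right]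
  intro E
  have hstat := trace_residual_mul_chainProd_update_of_isMinOn hW n.succ_pos (W 0 * E)
  rw [chainProd_update_zero_mul_right] at hstat
  simpa only [transpose_mul, transpose_smul, transpose_transpose, Matrix.smul_mul, trace_smul,
    smul_eq_mul, Matrix.mul_assoc] using hstat

lemma commute_transpose_mul_self_of_isMinOn (hlam : lam ≠ 0)
    (hW : IsMinOn (deepLoss (n + 1) lam d M) Set.univ W) :
    Commute (Mᵀ * M) ((W 0)ᵀ * W 0) := by
  have hleft := residual_mul_transpose_chainProd_of_isMinOn hW
  have hright := transpose_chainProd_mul_residual_of_isMinOn hW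
  set P := chainProd d W (n + 1)
  have hPM : Pᵀ * M = Mᵀ * P := transpose_mul_comm_of_isSymm_mul_sub <| by
    rw [hright]
    exact (isSymm_transpose_mul_self_rect _).smul _
  have hMP : M * Pᵀ = P * Mᵀ := by
    simpa using (transpose_mul_comm_of_isSymm_mul_sub (A := Mᵀ) (B := Pᵀ) <| by
      rw [← transpose_sub, ← transpose_mul, hleft]
      exact ((isSymm_transpose_mul_self_rect (W n)ᵀ).smul _).transpose).symm
  have hcoef : lam / (n + 1 : ℕ) ≠ 0 := div_ne_zero hlam (Nat.cast_ne_zero.2 n.succ_ne_zero)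
  have hcomm := commute_transpose_mul_sub hMP hPM
  rw [hright] at hcomm
  simpa only [inv_smul_smul₀ hcoef] using hcomm.smul_right (lam / (n + 1 : ℕ))⁻¹

end EndToEnd

namespace IsBalanced

variable {L : ℕ} {d : ℕ → ℕ} {W : ∀ i : ℕ, Matrix (Fin (d (i + 1))) (Fin (d i)) ℝ}

lemma frobNorm_sq_eq (h : IsBalanced d W L) {i : ℕ} (hi : i < L) :
    frobNorm (W i) ^ 2 = frobNorm (W 0) ^ 2 := by
  induction i with
  | zero => rfl
  | succ i ih => rw [frobNorm_sq, h i hi, trace_mul_comm, ← frobNorm_sq, ih (by omega)]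

lemma rank_eq (h : IsBalanced d W L) {i : ℕ} (hi : i < L) : (W i).rank = (W 0).rank := by
  induction i with
  | zero => rfl
  | succ i ih =>
    rw [← rank_transpose_mul_self, h i hi, rank_self_mul_transpose, ih (by omega)]

variable {v : Fin (d 0) → ℝ} {b : ℝ}

lemma gram_mulVec_chainProd_mulVec (h : IsBalanced d W L) (hv : ((W 0)ᵀ * W 0) *ᵥ v = b • v)
    {i : ℕ} (hi : i < L) :
    ((W i)ᵀ * W i) *ᵥ (chainProd d W i *ᵥ v) = b • (chainProd d W i *ᵥ v) := by
  induction i with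
  | zero => simpa [chainProd] using hv
  | succ i ih =>
    have hgram := congrArg (W i *ᵥ ·) (ih (by omega))
    rw [h i hi, chainProd_succ]
    simpa only [← mulVec_mulVec, mulVec_smul] using hgram

lemma chainProd_mulVec_dotProduct_self (h : IsBalanced d W L) (hv : v ⬝ᵥ v = 1)
    (hb : ((W 0)ᵀ * W 0) *ᵥ v = b • v) {i : ℕ} (hi : i ≤ L) :
    (chainProd d W i *ᵥ v) ⬝ᵥ (chainProd d W i *ᵥ v) = b ^ i := by
  induction i with
  | zero => simpa [chainProd] using hv
  | succ i ih =>
    rw [chainProd_succ, ← mulVec_mulVec, dotProduct_mulVec, ← mulVec_transpose, mulVec_mulVec,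
      h.gram_mulVec_chainProd_mulVec hb hi, smul_dotProduct, ih (by omega), smul_eq_mul, pow_succ']

end IsBalanced

/-- Unit vectors `e 0, …, e L` along which each of the layers `W 0, …, W (L - 1)` has the singular
value `y`: `e i` and `e (i + 1)` are right and left singular vectors of `W i`. -/
structure IsSingularChain {d : ℕ → ℕ} (W : ∀ i : ℕ, Matrix (Fin (d (i + 1))) (Fin (d i)) ℝ) (L : ℕ)
    (e : ∀ i, Fin (d i) → ℝ) (y : ℝ) : Prop where
  unit : ∀ i ≤ L, e i ⬝ᵥ e i = 1
  mulVec : ∀ i < L, W i *ᵥ e i = y • e (i + 1)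
  transpose_mulVec : ∀ i < L, (W i)ᵀ *ᵥ e (i + 1) = y • e i

/-- The layers `W` with a rank-one correction along `e`, which turns the singular value `y` of a
singular chain `e` of `W` into `z`. -/
def rescaleAlong {d : ℕ → ℕ} (W : ∀ i : ℕ, Matrix (Fin (d (i + 1))) (Fin (d i)) ℝ)
    (e : ∀ i, Fin (d i) → ℝ) (y z : ℝ) (i : ℕ) : Matrix (Fin (d (i + 1))) (Fin (d i)) ℝ :=
  W i + (z - y) • vecMulVec (e (i + 1)) (e i)

namespace IsSingularChain

variable {L : ℕ} {d : ℕ → ℕ} {W : ∀ i : ℕ, Matrix (Fin (d (i + 1))) (Fin (d i)) ℝ}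
  {e : ∀ i, Fin (d i) → ℝ} {y : ℝ}

lemma transpose_chainProd_mulVec (h : IsSingularChain W L e y) {k : ℕ} (hk : k ≤ L) :
    (chainProd d W k)ᵀ *ᵥ e k = y ^ k • e 0 := by
  induction k with
  | zero => simp [chainProd]
  | succ k ih =>
    rw [chainProd_succ, transpose_mul, ← mulVec_mulVec, h.transpose_mulVec k hk, mulVec_smul,
      ih (by omega), smul_smul, pow_succ']

lemma chainProd_mulVec (h : IsSingularChain W L e y) {k : ℕ} (hk : k ≤ L) :
    chainProd d W k *ᵥ e 0 = y ^ k • e k := by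
  induction k with
  | zero => simp [chainProd]
  | succ k ih =>
    rw [chainProd_succ, ← mulVec_mulVec, ih (by omega), mulVec_smul, h.mulVec k hk, smul_smul,
      pow_succ]

lemma chainProd_rescaleAlong (h : IsSingularChain W L e y) (z : ℝ) {k : ℕ} (hk : k ≤ L) :
    chainProd d (rescaleAlong W e y z) k
      = chainProd d W k + (z ^ k - y ^ k) • vecMulVec (e k) (e 0) := by
  induction k with
  | zero => simp [chainProd]
  | succ k ih =>
    have hleft : W k * vecMulVec (e k) (e 0) = y • vecMulVec (e (k + 1)) (e 0) := by
      rw [mul_vecMulVec, h.mulVec k hk, smul_vecMulVec]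
    have hright : vecMulVec (e (k + 1)) (e k) * chainProd d W k
        = y ^ k • vecMulVec (e (k + 1)) (e 0) := by
      rw [vecMulVec_mul, ← mulVec_transpose, h.transpose_chainProd_mulVec (by omega),
        vecMulVec_smul]
    have hmid : vecMulVec (e (k + 1)) (e k) * vecMulVec (e k) (e 0)
        = vecMulVec (e (k + 1)) (e 0) := by
      rw [vecMulVec_mul_vecMulVec, h.unit k (by omega), one_smul]
    rw [chainProd_succ, ih (by omega), rescaleAlong, chainProd_succ]
    simp only [Matrix.add_mul, Matrix.mul_add, Matrix.smul_mul, Matrix.mul_smul, hleft, hright,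
      hmid]
    module

lemma frobNorm_sq_rescaleAlong (h : IsSingularChain W L e y) (z : ℝ) {i : ℕ} (hi : i < L) :
    frobNorm (rescaleAlong W e y z i) ^ 2 = frobNorm (W i) ^ 2 + (z ^ 2 - y ^ 2) := by
  rw [rescaleAlong, frobNorm_sq_add_smul, trace_transpose_mul_vecMulVec, frobNorm_sq_vecMulVec,
    h.transpose_mulVec i hi, smul_dotProduct, h.unit i hi.le, h.unit (i + 1) hi, smul_eq_mul]
  ring

variable {lam : ℝ} {M : Matrix (Fin (d L)) (Fin (d 0)) ℝ}

lemma frobNorm_sq_sub_chainProd_rescaleAlong (h : IsSingularChain W L e y) (z : ℝ) :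
    frobNorm (M - chainProd d (rescaleAlong W e y z) L) ^ 2 = frobNorm (M - chainProd d W L) ^ 2
      + ((e L ⬝ᵥ M *ᵥ e 0 - z ^ L) ^ 2 - (e L ⬝ᵥ M *ᵥ e 0 - y ^ L) ^ 2) := by
  have hres : M - chainProd d (rescaleAlong W e y z) L
      = (M - chainProd d W L) + (y ^ L - z ^ L) • vecMulVec (e L) (e 0) := by
    rw [h.chainProd_rescaleAlong z le_rfl]
    module
  have hinner : trace ((M - chainProd d W L)ᵀ * vecMulVec (e L) (e 0))
      = e L ⬝ᵥ M *ᵥ e 0 - y ^ L := by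
    rw [trace_transpose_mul_vecMulVec, transpose_sub, sub_mulVec,
      h.transpose_chainProd_mulVec le_rfl, sub_dotProduct, smul_dotProduct, h.unit 0 L.zero_le,
      mulVec_transpose, ← dotProduct_mulVec, smul_eq_mul, mul_one]
  rw [hres, frobNorm_sq_add_smul, hinner, frobNorm_sq_vecMulVec, h.unit L le_rfl,
    h.unit 0 L.zero_le]
  ring

lemma deepLoss_rescaleAlong (h : IsSingularChain W L e y) (hL : L ≠ 0) (z : ℝ) :
    deepLoss L lam d M (rescaleAlong W e y z) = deepLoss L lam d M W
      + (((e L ⬝ᵥ M *ᵥ e 0 - z ^ L) ^ 2 + lam * z ^ 2)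
        - ((e L ⬝ᵥ M *ᵥ e 0 - y ^ L) ^ 2 + lam * y ^ 2)) := by
  have hsum : ∑ i : Fin L, frobNorm (rescaleAlong W e y z i) ^ 2
      = ∑ i : Fin L, frobNorm (W i) ^ 2 + L * (z ^ 2 - y ^ 2) := by
    simp only [fun i : Fin L => h.frobNorm_sq_rescaleAlong z i.2, Finset.sum_add_distrib,
      Finset.sum_const, Finset.card_univ, Fintype.card_fin, nsmul_eq_mul]
  rw [deepLoss, deepLoss, hsum, h.frobNorm_sq_sub_chainProd_rescaleAlong, mul_add, ← mul_assoc,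
    div_mul_cancel₀ _ (Nat.cast_ne_zero.2 hL)]
  ring

lemma sub_pow_sq_add_le_of_isMinOn (h : IsSingularChain W L e y) (hL : L ≠ 0)
    (hW : IsMinOn (deepLoss L lam d M) Set.univ W) (z : ℝ) :
    (e L ⬝ᵥ M *ᵥ e 0 - y ^ L) ^ 2 + lam * y ^ 2
      ≤ (e L ⬝ᵥ M *ᵥ e 0 - z ^ L) ^ 2 + lam * z ^ 2 := by
  have hle := isMinOn_univ_iff.1 hW (rescaleAlong W e y z)
  rw [h.deepLoss_rescaleAlong hL] at hle
  linarith

end IsSingularChain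

namespace IsBalanced

variable {L n : ℕ} {d : ℕ → ℕ} {W : ∀ i : ℕ, Matrix (Fin (d (i + 1))) (Fin (d i)) ℝ}
  {v : Fin (d 0) → ℝ} {y : ℝ}

lemma isSingularChain_of_pos (h : IsBalanced d W L) (hy : 0 < y) (hv : v ⬝ᵥ v = 1)
    (hb : ((W 0)ᵀ * W 0) *ᵥ v = y ^ 2 • v) :
    IsSingularChain W L (fun i => (y ^ i)⁻¹ • (chainProd d W i *ᵥ v)) y where
  unit i hi := by
    rw [smul_dotProduct, dotProduct_smul, h.chainProd_mulVec_dotProduct_self hv hb hi,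
      smul_eq_mul, smul_eq_mul]
    field_simp
    ring
  mulVec i _ := by
    rw [mulVec_smul, mulVec_mulVec, ← chainProd_succ, smul_smul, pow_succ]
    congr 1
    field_simp
  transpose_mulVec i hi := by
    rw [mulVec_smul, chainProd_succ, ← mulVec_mulVec, mulVec_mulVec,
      h.gram_mulVec_chainProd_mulVec hb hi, smul_smul, smul_smul, pow_succ]
    congr 1
    field_simp

lemma exists_unit_mulVec_eq_zero (h : IsBalanced d W (n + 1))
    (hdim : ∀ i, 1 ≤ i → i ≤ n → min (d 0) (d (n + 1)) ≤ d i)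
    (hv : ∃ v ≠ 0, W 0 *ᵥ v = 0) (hu : ∃ u ≠ 0, (W n)ᵀ *ᵥ u = 0) {i : ℕ} (hi : 1 ≤ i)
    (hin : i ≤ n) : ∃ w, w ⬝ᵥ w = 1 ∧ W i *ᵥ w = 0 := by
  apply exists_unit_mulVec_eq_zero_of_rank_lt
  have hrank_first := (rank_lt_card_iff_exists_mulVec_eq_zero _).2 hv
  have hrank_last := (rank_lt_card_iff_exists_mulVec_eq_zero _).2 hu
  rw [rank_transpose, h.rank_eq n.lt_succ_self] at hrank_last
  rw [Fintype.card_fin] at hrank_first hrank_last ⊢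
  rw [h.rank_eq (Nat.lt_succ_of_le hin)]
  exact (lt_min hrank_first hrank_last).trans_le (hdim i hi hin)

lemma transpose_mulVec_eq_zero (h : IsBalanced d W L) {i : ℕ} (hi : i + 1 < L)
    {w : Fin (d (i + 1)) → ℝ} (hw : W (i + 1) *ᵥ w = 0) : (W i)ᵀ *ᵥ w = 0 := by
  rw [← transpose_mul_self_mulVec_eq_zero_iff, transpose_transpose, ← h i hi, ← mulVec_mulVec, hw,
    mulVec_zero]

lemma exists_isSingularChain_zero (h : IsBalanced d W (n + 1))
    (hdim : ∀ i, 1 ≤ i → i ≤ n → min (d 0) (d (n + 1)) ≤ d i)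
    (hv : v ⬝ᵥ v = 1) (hWv : W 0 *ᵥ v = 0) {u : Fin (d (n + 1)) → ℝ} (hu : u ⬝ᵥ u = 1)
    (hWu : (W n)ᵀ *ᵥ u = 0) :
    ∃ e, IsSingularChain W (n + 1) e 0 ∧ e 0 = v ∧ e (n + 1) = u := by
  choose! w hw_unit hw_ker using fun i (hi : 1 ≤ i) (hin : i ≤ n) =>
    h.exists_unit_mulVec_eq_zero hdim ⟨v, ne_zero_of_dotProduct_self_eq_one hv, hWv⟩
      ⟨u, ne_zero_of_dotProduct_self_eq_one hu, hWu⟩ hi hin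
  set f := Function.update w 0 v
  have hf_zero : f 0 = v := Function.update_self ..
  have hf (i : ℕ) (hi : i ≤ n) : f i ⬝ᵥ f i = 1 ∧ W i *ᵥ f i = 0 := by
    rcases i.eq_zero_or_pos with rfl | hpos
    · exact hf_zero ▸ ⟨hv, hWv⟩
    · rw [show f i = w i from Function.update_of_ne hpos.ne' ..]
      exact ⟨hw_unit i hpos hi, hw_ker i hpos hi⟩
  set e := Function.update f (n + 1) u
  have he_last : e (n + 1) = u := Function.update_self ..
  have he (i : ℕ) (hi : i ≤ n) : e i = f i := Function.update_of_ne (by omega) ..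
  refine ⟨e, ⟨fun i hi => ?_, fun i hi => ?_, fun i hi => ?_⟩, ?_, he_last⟩
  · rcases hi.eq_or_lt with rfl | hlt
    · rw [he_last, hu]
    · rw [he i (by omega), (hf i (by omega)).1]
  · rw [zero_smul, he i (by omega), (hf i (by omega)).2]
  · rw [zero_smul]
    rcases (Nat.le_of_lt_succ hi).eq_or_lt with rfl | hlt
    · rw [he_last, hWu]
    · rw [he (i + 1) (by omega)]
      exact h.transpose_mulVec_eq_zero (Nat.succ_lt_succ hlt) (hf (i + 1) (by omega)).2
  · rw [he 0 n.zero_le, hf_zero]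

end IsBalanced

section JointEigenvector

variable {n : ℕ} {lam : ℝ} {d : ℕ → ℕ} {M : Matrix (Fin (d (n + 1))) (Fin (d 0)) ℝ}
  {W W' : ∀ i : ℕ, Matrix (Fin (d (i + 1))) (Fin (d i)) ℝ} {v : Fin (d 0) → ℝ} {μ b : ℝ}

lemma exists_mulVec_eq_smul_of_isMinOn (hlam : 0 ≤ lam)
    (hW : IsMinOn (deepLoss (n + 1) lam d M) Set.univ W) {e : ∀ i, Fin (d i) → ℝ} {y : ℝ}
    (hy : 0 < y) (he : IsSingularChain W (n + 1) e y) :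
    ∃ s : ℝ, 0 ≤ s ∧ M *ᵥ e 0 = s • e (n + 1) := by
  have hres := congrArg (· *ᵥ e (n + 1)) (residual_mul_transpose_chainProd_of_isMinOn hW)
  simp only [← mulVec_mulVec, smul_mulVec, he.transpose_chainProd_mulVec le_rfl,
    he.transpose_mulVec n n.lt_succ_self, mulVec_smul, sub_mulVec, he.chainProd_mulVec le_rfl,
    he.mulVec n n.lt_succ_self, smul_smul] at hres
  refine ⟨y ^ (n + 1) + (y ^ (n + 1))⁻¹ * (lam / (n + 1 : ℕ) * (y * y)), by positivity, ?_⟩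
  rw [add_smul, mul_smul, ← hres, inv_smul_smul₀ (pow_pos hy _).ne', add_sub_cancel]

lemma sub_pow_sq_add_le_of_isMinOn_of_pos (hlam : 0 < lam)
    (hW : IsMinOn (deepLoss (n + 1) lam d M) Set.univ W) (hv : v ⬝ᵥ v = 1)
    (hM : (Mᵀ * M) *ᵥ v = μ • v) (hb : 0 < b) (hB : ((W 0)ᵀ * W 0) *ᵥ v = b • v) (z : ℝ) :
    (√μ - √b ^ (n + 1)) ^ 2 + lam * √b ^ 2 ≤ (√μ - z ^ (n + 1)) ^ 2 + lam * z ^ 2 := by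
  have hy : 0 < √b := Real.sqrt_pos.2 hb
  have hchain := (isBalanced_of_isMinOn hlam.ne' hW).isSingularChain_of_pos hy hv
    (by rwa [Real.sq_sqrt hb.le])
  set e : ∀ i, Fin (d i) → ℝ := fun i => (√b ^ i)⁻¹ • (chainProd d W i *ᵥ v)
  have he : e 0 = v := by simp [e, chainProd]
  obtain ⟨s, hs, hMe⟩ := exists_mulVec_eq_smul_of_isMinOn hlam.le hW hy hchain
  have hinner : e (n + 1) ⬝ᵥ M *ᵥ e 0 = s := by
    rw [hMe, dotProduct_smul, hchain.unit _ le_rfl, smul_eq_mul, mul_one]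
  have hsqrt : √μ = s := by
    rw [← mulVec_dotProduct_mulVec_self_of_eigenvector hv hM, ← he, hMe, smul_dotProduct,
      dotProduct_smul, hchain.unit _ le_rfl, smul_eq_mul, smul_eq_mul, mul_one,
      Real.sqrt_mul_self hs]
  simpa only [hinner, hsqrt] using hchain.sub_pow_sq_add_le_of_isMinOn n.succ_ne_zero hW z

lemma transpose_last_mulVec_mulVec_eq_zero_of_isMinOn (hlam : lam ≠ 0)
    (hW : IsMinOn (deepLoss (n + 1) lam d M) Set.univ W) (hWv : W 0 *ᵥ v = 0) :
    (W n)ᵀ *ᵥ (M *ᵥ v) = 0 := by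
  have hcoef : lam / (n + 1 : ℕ) ≠ 0 := div_ne_zero hlam (Nat.cast_ne_zero.2 n.succ_ne_zero)
  have hPM : (chainProd d W (n + 1))ᵀ *ᵥ (M *ᵥ v) = 0 := by
    have hright := congrArg (· *ᵥ v) (transpose_chainProd_mul_residual_of_isMinOn hW)
    simpa only [← mulVec_mulVec, smul_mulVec, sub_mulVec, hWv, chainProd_succ_mulVec_eq_zero hWv,
      mulVec_zero, smul_zero, sub_zero] using hright
  have hleft := congrArg (· *ᵥ (M *ᵥ v)) (residual_mul_transpose_chainProd_of_isMinOn hW)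
  rw [← transpose_mul_self_mulVec_eq_zero_iff, transpose_transpose]
  simpa only [← mulVec_mulVec _ _ (chainProd d W (n + 1))ᵀ, hPM, mulVec_zero, smul_mulVec,
    eq_comm (a := (0 : Fin (d (n + 1)) → ℝ)), smul_eq_zero, hcoef, false_or] using hleft

lemma sqrt_sq_le_of_isMinOn_of_mulVec_eq_zero (hlam : 0 < lam)
    (hdim : ∀ i, 1 ≤ i → i ≤ n → min (d 0) (d (n + 1)) ≤ d i)
    (hW : IsMinOn (deepLoss (n + 1) lam d M) Set.univ W) (hv : v ⬝ᵥ v = 1)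
    (hM : (Mᵀ * M) *ᵥ v = μ • v) (hWv : W 0 *ᵥ v = 0) (z : ℝ) :
    √μ ^ 2 ≤ (√μ - z ^ (n + 1)) ^ 2 + lam * z ^ 2 := by
  rcases (Real.sqrt_nonneg μ).eq_or_lt with hzero | hs
  · rw [← hzero, zero_pow two_ne_zero]
    positivity
  have hsq : √μ * √μ = μ := Real.mul_self_sqrt (Real.sqrt_pos.1 hs).le
  have hMv : (M *ᵥ v) ⬝ᵥ (M *ᵥ v) = √μ * √μ := by
    rw [mulVec_dotProduct_mulVec_self_of_eigenvector hv hM, hsq]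
  obtain ⟨e, he, rfl, he_last⟩ :=
    (isBalanced_of_isMinOn hlam.ne' hW).exists_isSingularChain_zero hdim hv hWv
      (u := (√μ)⁻¹ • (M *ᵥ v))
      (by
        rw [smul_dotProduct, dotProduct_smul, hMv, smul_eq_mul, smul_eq_mul]
        field_simp)
      (by rw [mulVec_smul, transpose_last_mulVec_mulVec_eq_zero_of_isMinOn hlam.ne' hW hWv,
        smul_zero])
  have hinner : e (n + 1) ⬝ᵥ M *ᵥ e 0 = √μ := by
    rw [he_last, smul_dotProduct, hMv, smul_eq_mul, inv_mul_cancel_left₀ hs.ne']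
  simpa [hinner] using he.sub_pow_sq_add_le_of_isMinOn n.succ_ne_zero hW z

lemma isMinOn_scalarLoss_of_isMinOn_deepLoss (hlam : 0 < lam)
    (hdim : ∀ i, 1 ≤ i → i ≤ n → min (d 0) (d (n + 1)) ≤ d i)
    (hW : IsMinOn (deepLoss (n + 1) lam d M) Set.univ W) (hv : v ⬝ᵥ v = 1)
    (hM : (Mᵀ * M) *ᵥ v = μ • v) (hB : ((W 0)ᵀ * W 0) *ᵥ v = b • v) :
    IsMinOn (scalarLoss (2 / (n + 1 : ℕ)) lam √μ) (Set.Ici 0) (√b ^ (n + 1)) := by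
  refine isMinOn_scalarLoss_pow n.succ_ne_zero (Real.sqrt_nonneg b) fun z => ?_
  rcases (nonneg_of_eigenvector_transpose_mul_self hv hB).eq_or_lt with rfl | hb
  · rw [zero_smul, transpose_mul_self_mulVec_eq_zero_iff] at hB
    simpa using sqrt_sq_le_of_isMinOn_of_mulVec_eq_zero hlam hdim hW hv hM hB z
  · exact sub_pow_sq_add_le_of_isMinOn_of_pos hlam hW hv hM hb hB z

lemma transpose_mul_self_eq_of_isMinOn (hn : 2 ≤ n) (hlam : 0 < lam) {q : ℝ}
    (hq : q = 2 / (n + 1 : ℕ))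
    (hdim : ∀ i, 1 ≤ i → i ≤ n → min (d 0) (d (n + 1)) ≤ d i)
    (hσ : ∀ i, singularValue M i ≠ threshold q lam)
    (hW : IsMinOn (deepLoss (n + 1) lam d M) Set.univ W)
    (hW' : IsMinOn (deepLoss (n + 1) lam d M) Set.univ W') :
    (W 0)ᵀ * W 0 = (W' 0)ᵀ * W' 0 := by
  have hq0 : 0 < q := by
    rw [hq]
    positivity
  have hq1 : q < 1 := by
    rw [hq, div_lt_one (by positivity)]
    exact_mod_cast Nat.lt_succ_of_le hn
  refine eq_of_commute_of_unit_eigenvectors (isSymm_transpose_mul_self_rect M)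
    (isSymm_transpose_mul_self_rect _) (isSymm_transpose_mul_self_rect _)
    (commute_transpose_mul_self_of_isMinOn hlam.ne' hW)
    (commute_transpose_mul_self_of_isMinOn hlam.ne' hW')
    fun μ b b' v v' hv hM hB hv' hM' hB' => ?_
  have hμ := sqrt_ne_of_forall_singularValue_ne (threshold_pos hlam hq1) hσ hv hM
  have hmin := isMinOn_scalarLoss_of_isMinOn_deepLoss hlam hdim hW hv hM hB
  have hmin' := isMinOn_scalarLoss_of_isMinOn_deepLoss hlam hdim hW' hv' hM' hB'
  rw [← hq] at hmin hmin'
  have hpow : √b ^ (n + 1) = √b' ^ (n + 1) :=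
    eq_of_isMinOn_scalarLoss hlam.le hq0 hq1 hμ (by positivity) (by positivity) hmin hmin'
  rw [pow_left_inj₀ (Real.sqrt_nonneg _) (Real.sqrt_nonneg _) n.succ_ne_zero] at hpow
  exact (Real.sqrt_inj (nonneg_of_eigenvector_transpose_mul_self hv hB)
    (nonneg_of_eigenvector_transpose_mul_self hv' hB')).1 hpow

end JointEigenvector

/-- If no singular value of `M♮` equals the threshold `τ`, then the Frobenius
norm of each layer is the same across all global minimizers of the
ℓ²-regularized deep matrix factorization objective: for any two global
minimizers `W`, `W'` and any layer indices `i`, `j`, `‖W_i‖_F = ‖W'_j‖_F`. -/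
theorem stmt9 (L : ℕ) (hL : 3 ≤ L) (lam : ℝ) (hlam : 0 < lam) (q τ : ℝ)
    (hq : q = 2 / L)
    (hτ : τ = (1 - q / 2) * lam ^ (1 / (2 - q)) * (1 - q) ^ ((q - 1) / (2 - q)))
    (d : ℕ → ℕ)
    (hdim : ∀ i : ℕ, 1 ≤ i → i ≤ L - 1 → min (d 0) (d L) ≤ d i)
    (Mnat : Matrix (Fin (d L)) (Fin (d 0)) ℝ)
    (hσ : ∀ i : Fin (min (d L) (d 0)), singularValue Mnat i ≠ τ)
    (W W' : ∀ i : ℕ, Matrix (Fin (d (i + 1))) (Fin (d i)) ℝ)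
    (hW : ∀ V : ∀ i : ℕ, Matrix (Fin (d (i + 1))) (Fin (d i)) ℝ,
      deepLoss L lam d Mnat W ≤ deepLoss L lam d Mnat V)
    (hW' : ∀ V : ∀ i : ℕ, Matrix (Fin (d (i + 1))) (Fin (d i)) ℝ,
      deepLoss L lam d Mnat W' ≤ deepLoss L lam d Mnat V)
    (i j : Fin L) :
    frobNorm (W i.1) = frobNorm (W' j.1) := by
  obtain ⟨n, rfl⟩ : ∃ n, L = n + 1 := ⟨L - 1, by omega⟩
  subst hτ
  have hmin := isMinOn_univ_iff.2 hW
  have hmin' := isMinOn_univ_iff.2 hW'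
  have hgram : (W 0)ᵀ * W 0 = (W' 0)ᵀ * W' 0 :=
    transpose_mul_self_eq_of_isMinOn (by omega) hlam hq hdim hσ hmin hmin'
  have hsq : frobNorm (W i.1) ^ 2 = frobNorm (W' j.1) ^ 2 := by
    rw [(isBalanced_of_isMinOn hlam.ne' hmin).frobNorm_sq_eq i.2,
      (isBalanced_of_isMinOn hlam.ne' hmin').frobNorm_sq_eq j.2, frobNorm_sq, frobNorm_sq, hgram]
  exact (sq_eq_sq₀ (Real.sqrt_nonneg _) (Real.sqrt_nonneg _)).1 hsq
end

section
/- Let A, B ∈ ℝ^{n×n}. Then tr(AB) ≤ Σ_{i=1}^n σ_i(A)·σ_i(B), where σ_1(A) ≥ ⋯ ≥ σ_n(A) and σ_1(B) ≥ ⋯ ≥ σ_n(B) are the non-increasingly ordered singular values of A and B (von Neumann's trace inequality). -/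
open Matrix

/-!
Expand `T` and `S` in singular vectors, `T eᵢ = sᵢ hᵢ` and `S fⱼ = tⱼ gⱼ`, so that
`tr (T S) = ∑ᵢⱼ sᵢ tⱼ ⟪eᵢ, gⱼ⟫ ⟪fⱼ, hᵢ⟫`. By AM-GM this is at most `∑ᵢⱼ sᵢ tⱼ Mᵢⱼ` with
`Mᵢⱼ = (|⟪eᵢ, gⱼ⟫|² + |⟪fⱼ, hᵢ⟫|²) / 2`, and Bessel's inequality makes `M` doubly substochastic.
Maximising `∑ᵢⱼ sᵢ tⱼ Mᵢⱼ` over such `M` is a linear programme; a dual feasible point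
`sᵢ tⱼ ≤ uᵢ + vⱼ` that is tight on the diagonal bounds it by `∑ᵢ sᵢ tᵢ`.
-/

open Module
open scoped InnerProductSpace

section Rearrangement

theorem nonneg_of_antitone_of_eq_zero {α : Type*} [Preorder α] [Zero α] {s : ℕ → α}
    (hs : Antitone s) {N : ℕ} (hN : ∀ i, N ≤ i → s i = 0) (i : ℕ) : 0 ≤ s i :=
  (hN _ (le_max_right i N)).ge.trans (hs (le_max_left i N))

theorem sum_le_sum_range_of_nonneg_of_eq_zero {α : Type*} [AddCommMonoid α] [PartialOrder α]
    [IsOrderedAddMonoid α] {f : ℕ → α} (hf : ∀ i, 0 ≤ f i) {N : ℕ}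
    (hN : ∀ i, N ≤ i → f i = 0) (m : ℕ) : ∑ i : Fin m, f i ≤ ∑ i ∈ Finset.range N, f i := by
  rw [Fin.sum_univ_eq_sum_range]
  calc ∑ i ∈ Finset.range m, f i
      ≤ ∑ i ∈ Finset.range (max m N), f i :=
        Finset.sum_le_sum_of_subset_of_nonneg (Finset.range_mono (le_max_left m N))
          fun i _ _ => hf i
    _ = ∑ i ∈ Finset.range N, f i := Eq.symm <|
        Finset.sum_subset (Finset.range_mono (le_max_right m N)) fun i _ hi =>
          hN i (not_lt.1 fun h => hi (Finset.mem_range.2 h))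

variable {R : Type*} [CommRing R] [LinearOrder R] [IsStrictOrderedRing R]

theorem exists_potentials_of_antitone {s t : ℕ → R} (hs : Antitone s) (ht : Antitone t)
    (ht0 : ∀ i, 0 ≤ t i) {N : ℕ} (hN : ∀ i, N ≤ i → s i = 0) :
    ∃ u v : ℕ → R, (∀ i, 0 ≤ u i) ∧ (∀ i, 0 ≤ v i) ∧ (∀ i j, s i * t j ≤ u i + v j) ∧
      ∀ i, u i + v i = s i * t i := by
  induction N generalizing s t with
  | zero => exact ⟨0, 0, by simp, by simp, by simp [hN], by simp [hN]⟩
  | succ N ih =>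
    obtain ⟨u, v, hu, hv, hle, heq⟩ := ih (s := fun i => s (i + 1)) (t := fun i => t (i + 1))
      (fun i j hij => hs (by lia)) (fun i j hij => ht (by lia)) (fun i => ht0 _)
      (fun i hi => hN _ (by lia))
    have hs1 : 0 ≤ s 1 := nonneg_of_antitone_of_eq_zero hs hN 1
    have hs01 : 0 ≤ s 0 - s 1 := sub_nonneg.2 (hs zero_le_one)
    have ht01 : 0 ≤ t 0 - t 1 := sub_nonneg.2 (ht zero_le_one)
    let uExt : ℕ → R := fun | 0 => u 0 + (s 0 - s 1) * t 0 | i + 1 => u i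
    let vExt : ℕ → R := fun | 0 => v 0 + (t 0 - t 1) * s 1 | i + 1 => v i
    have htight : ∀ i, uExt i + vExt i = s i * t i
      | 0 => by simp only [uExt, vExt]; linarith [heq 0]
      | i + 1 => heq i
    refine ⟨uExt, vExt, ?_, ?_, ?_, htight⟩
    · rintro (_ | i)
      exacts [add_nonneg (hu 0) (mul_nonneg hs01 (ht0 0)), hu i]
    · rintro (_ | i)
      exacts [add_nonneg (hv 0) (mul_nonneg ht01 hs1), hv i]
    · rintro (_ | i) (_ | j)
      · exact (htight 0).ge
      · have htj : (s 0 - s 1) * t (j + 1) ≤ (s 0 - s 1) * t 0 :=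
          mul_le_mul_of_nonneg_left (ht (Nat.zero_le _)) hs01
        simp only [uExt, vExt]
        linarith [hle 0 j]
      · have hsi : (t 0 - t 1) * s (i + 1) ≤ (t 0 - t 1) * s 1 :=
          mul_le_mul_of_nonneg_left (hs (by lia)) ht01
        simp only [uExt, vExt]
        linarith [hle i 0]
      · exact hle i j

theorem sum_mul_mul_le_of_substochastic {s t : ℕ → R} (hs : Antitone s) (ht : Antitone t)
    {m n : ℕ} (hsm : ∀ i, m ≤ i → s i = 0) (htn : ∀ j, n ≤ j → t j = 0)
    {M : Matrix (Fin m) (Fin n) R} (hM : ∀ i j, 0 ≤ M i j)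
    (hrow : ∀ i, ∑ j, M i j ≤ 1) (hcol : ∀ j, ∑ i, M i j ≤ 1) :
    ∑ i : Fin m, ∑ j : Fin n, s i * t j * M i j ≤ ∑ i ∈ Finset.range (min m n), s i * t i := by
  obtain ⟨u, v, hu, hv, hle, heq⟩ :=
    exists_potentials_of_antitone hs ht (nonneg_of_antitone_of_eq_zero ht htn) hsm
  have hst : ∀ i, min m n ≤ i → u i + v i = 0 := fun i hi => by
    rcases min_le_iff.1 hi with h | h
    · rw [heq, hsm i h, zero_mul]
    · rw [heq, htn i h, mul_zero]
  have hu_zero : ∀ i, min m n ≤ i → u i = 0 := fun i hi => by linarith [hu i, hv i, hst i hi]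
  have hv_zero : ∀ i, min m n ≤ i → v i = 0 := fun i hi => by linarith [hu i, hv i, hst i hi]
  calc ∑ i : Fin m, ∑ j : Fin n, s i * t j * M i j
      ≤ ∑ i : Fin m, ∑ j : Fin n, (u i + v j) * M i j :=
        Finset.sum_le_sum fun i _ => Finset.sum_le_sum fun j _ =>
          mul_le_mul_of_nonneg_right (hle i j) (hM i j)
    _ = ∑ i : Fin m, u i * ∑ j, M i j + ∑ j : Fin n, v j * ∑ i, M i j := by
        simp only [add_mul, Finset.sum_add_distrib, Finset.mul_sum]
        rw [Finset.sum_comm (f := fun (i : Fin m) (j : Fin n) => v j * M i j)]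
    _ ≤ ∑ i : Fin m, u i + ∑ j : Fin n, v j :=
        add_le_add
          (Finset.sum_le_sum fun i _ => mul_le_of_le_one_right (hu i) (hrow i))
          (Finset.sum_le_sum fun j _ => mul_le_of_le_one_right (hv j) (hcol j))
    _ ≤ ∑ i ∈ Finset.range (min m n), u i + ∑ i ∈ Finset.range (min m n), v i :=
        add_le_add (sum_le_sum_range_of_nonneg_of_eq_zero hu hu_zero m)
          (sum_le_sum_range_of_nonneg_of_eq_zero hv hv_zero n)
    _ = ∑ i ∈ Finset.range (min m n), s i * t i := by
        rw [← Finset.sum_add_distrib]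
        exact Finset.sum_congr rfl fun i _ => heq i

end Rearrangement

section SingularVectors

variable {𝕜 E F : Type*} [RCLike 𝕜]
  [NormedAddCommGroup E] [InnerProductSpace 𝕜 E] [FiniteDimensional 𝕜 E]
  [NormedAddCommGroup F] [InnerProductSpace 𝕜 F] [FiniteDimensional 𝕜 F]

/-- An orthonormal basis of right singular vectors of `T`: eigenvectors of `T* T`, in the order of
`T.singularValues`. -/
noncomputable def rightSingularBasis (T : E →ₗ[𝕜] F) :
    OrthonormalBasis (Fin (finrank 𝕜 E)) 𝕜 E :=
  T.isSymmetric_adjoint_comp_self.eigenvectorBasis rfl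

/-- The left singular vector of `T` paired with the `i`-th vector of `rightSingularBasis T`. It is a
unit vector if the `i`-th singular value is nonzero, and the zero vector otherwise, since then
`(T.singularValues i)⁻¹ = 0`. -/
noncomputable def leftSingularVector (T : E →ₗ[𝕜] F) (i : Fin (finrank 𝕜 E)) : F :=
  ((T.singularValues i)⁻¹ : 𝕜) • T (rightSingularBasis T i)

variable (T : E →ₗ[𝕜] F)

theorem inner_map_rightSingularBasis (i j : Fin (finrank 𝕜 E)) :
    ⟪T (rightSingularBasis T i), T (rightSingularBasis T j)⟫_𝕜 =
      if i = j then (T.singularValues j : 𝕜) ^ 2 else 0 := by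
  have heigen : (LinearMap.adjoint T ∘ₗ T) (rightSingularBasis T j) =
      (T.singularValues j : 𝕜) ^ 2 • rightSingularBasis T j := by
    rw [rightSingularBasis, LinearMap.IsSymmetric.apply_eigenvectorBasis,
      ← T.sq_singularValues_fin rfl, RCLike.ofReal_pow]
  rw [← LinearMap.adjoint_inner_right, ← LinearMap.comp_apply, heigen, inner_smul_right,
    orthonormal_iff_ite.1 (rightSingularBasis T).orthonormal, mul_ite, mul_one, mul_zero]

theorem norm_map_rightSingularBasis (i : Fin (finrank 𝕜 E)) :
    ‖T (rightSingularBasis T i)‖ = T.singularValues i := by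
  have hsq := inner_map_rightSingularBasis T i i
  rw [if_pos rfl, inner_self_eq_norm_sq_to_K] at hsq
  exact (sq_eq_sq₀ (norm_nonneg _) (T.singularValues_nonneg i)).1 (by exact_mod_cast hsq)

theorem map_rightSingularBasis (i : Fin (finrank 𝕜 E)) :
    T (rightSingularBasis T i) = (T.singularValues i : 𝕜) • leftSingularVector T i := by
  rcases eq_or_ne (T.singularValues i) 0 with hi | hi
  · rw [hi, RCLike.ofReal_zero, zero_smul, ← norm_eq_zero, norm_map_rightSingularBasis, hi]
  · rw [leftSingularVector, smul_inv_smul₀ (RCLike.ofReal_ne_zero.2 hi)]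

theorem norm_leftSingularVector_le_one (i : Fin (finrank 𝕜 E)) :
    ‖leftSingularVector T i‖ ≤ 1 := by
  rw [leftSingularVector, norm_smul, norm_map_rightSingularBasis, norm_inv, RCLike.norm_ofReal,
    abs_of_nonneg (T.singularValues_nonneg i)]
  exact inv_mul_le_one

theorem orthonormal_leftSingularVector :
    Orthonormal 𝕜 fun i : {i : Fin (finrank 𝕜 E) // T.singularValues i ≠ 0} =>
      leftSingularVector T i := by
  rw [orthonormal_iff_ite]
  rintro ⟨i, hi⟩ ⟨j, hj⟩
  have hj_ne : (T.singularValues j : 𝕜) ≠ 0 := RCLike.ofReal_ne_zero.2 hj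
  simp only [leftSingularVector, inner_smul_left, inner_smul_right, inner_map_rightSingularBasis,
    map_inv₀, RCLike.conj_ofReal, Subtype.mk.injEq]
  split_ifs with hij
  · subst hij
    field_simp
  · simp only [mul_zero]

theorem sum_sq_norm_inner_leftSingularVector_le (y : F) :
    ∑ i, ‖⟪leftSingularVector T i, y⟫_𝕜‖ ^ 2 ≤ ‖y‖ ^ 2 := by
  have hsupport : ∀ i, ‖⟪leftSingularVector T i, y⟫_𝕜‖ ^ 2 ≠ 0 → T.singularValues i ≠ 0 :=
    fun i hi h => hi (by simp [leftSingularVector, h])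
  rw [← Finset.sum_filter_of_ne fun i _ => hsupport i, ← Finset.sum_subtype_eq_sum_filter]
  exact (orthonormal_leftSingularVector T).sum_inner_products_le y

theorem trace_comp_eq_sum_singularValues (S : F →ₗ[𝕜] E) :
    LinearMap.trace 𝕜 F (T ∘ₗ S) =
      ∑ i : Fin (finrank 𝕜 E), ∑ j : Fin (finrank 𝕜 F),
        (T.singularValues i : 𝕜) * S.singularValues j *
          (⟪rightSingularBasis T i, leftSingularVector S j⟫_𝕜 *
            ⟪rightSingularBasis S j, leftSingularVector T i⟫_𝕜) := by
  have hterm (j : Fin (finrank 𝕜 F)) :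
      ⟪rightSingularBasis S j, (T ∘ₗ S) (rightSingularBasis S j)⟫_𝕜 =
        ∑ i : Fin (finrank 𝕜 E), (T.singularValues i : 𝕜) * S.singularValues j *
          (⟪rightSingularBasis T i, leftSingularVector S j⟫_𝕜 *
            ⟪rightSingularBasis S j, leftSingularVector T i⟫_𝕜) := by
    have hexpand : T (leftSingularVector S j) =
        ∑ i, ⟪rightSingularBasis T i, leftSingularVector S j⟫_𝕜 •
          (T.singularValues i : 𝕜) • leftSingularVector T i := by
      conv_lhs => rw [← (rightSingularBasis T).sum_repr' (leftSingularVector S j)]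
      simp only [map_sum, map_smul, map_rightSingularBasis]
    rw [LinearMap.comp_apply, map_rightSingularBasis, map_smul, hexpand]
    simp only [inner_smul_right, inner_sum, Finset.mul_sum]
    exact Finset.sum_congr rfl fun i _ => by ring
  rw [LinearMap.trace_eq_sum_inner _ (rightSingularBasis S), Finset.sum_comm]
  exact Finset.sum_congr rfl fun j _ => hterm j

/-- The mean of the squared overlaps of the `i`-th singular pair of `T` with the `j`-th singular
pair of `S`. By AM-GM these weights dominate the coefficients in
`trace_comp_eq_sum_singularValues`. -/
noncomputable def singularOverlap (T : E →ₗ[𝕜] F) (S : F →ₗ[𝕜] E) :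
    Matrix (Fin (finrank 𝕜 E)) (Fin (finrank 𝕜 F)) ℝ := fun i j =>
  (‖⟪rightSingularBasis T i, leftSingularVector S j⟫_𝕜‖ ^ 2 +
    ‖⟪rightSingularBasis S j, leftSingularVector T i⟫_𝕜‖ ^ 2) / 2

theorem singularOverlap_swap (S : F →ₗ[𝕜] E) (i : Fin (finrank 𝕜 E)) (j : Fin (finrank 𝕜 F)) :
    singularOverlap S T j i = singularOverlap T S i j := by
  rw [singularOverlap, singularOverlap, add_comm]

theorem sum_singularOverlap_le_one (S : F →ₗ[𝕜] E) (i : Fin (finrank 𝕜 E)) :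
    ∑ j, singularOverlap T S i j ≤ 1 := by
  have hright : ∑ j, ‖⟪rightSingularBasis T i, leftSingularVector S j⟫_𝕜‖ ^ 2 ≤ 1 := by
    simpa [norm_inner_symm] using
      sum_sq_norm_inner_leftSingularVector_le S (rightSingularBasis T i)
  have hleft : ∑ j, ‖⟪rightSingularBasis S j, leftSingularVector T i⟫_𝕜‖ ^ 2 ≤ 1 := by
    rw [(rightSingularBasis S).sum_sq_norm_inner_right]
    exact pow_le_one₀ (norm_nonneg _) (norm_leftSingularVector_le_one T i)
  simp only [singularOverlap]
  rw [← Finset.sum_div, Finset.sum_add_distrib]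
  linarith

theorem norm_trace_comp_le_sum_singularOverlap (S : F →ₗ[𝕜] E) :
    ‖LinearMap.trace 𝕜 F (T ∘ₗ S)‖ ≤
      ∑ i : Fin (finrank 𝕜 E), ∑ j : Fin (finrank 𝕜 F),
        T.singularValues i * S.singularValues j * singularOverlap T S i j := by
  rw [trace_comp_eq_sum_singularValues]
  refine norm_sum_le_of_le _ fun i _ => norm_sum_le_of_le _ fun j _ => ?_
  simp only [norm_mul, RCLike.norm_ofReal, abs_of_nonneg (LinearMap.singularValues_nonneg _ _)]
  refine mul_le_mul_of_nonneg_left ?_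
    (mul_nonneg (T.singularValues_nonneg i) (S.singularValues_nonneg j))
  rw [singularOverlap, le_div_iff₀ two_pos, mul_comm, ← mul_assoc]
  exact two_mul_le_add_sq _ _

theorem norm_trace_comp_le_sum_singularValues (S : F →ₗ[𝕜] E) :
    ‖LinearMap.trace 𝕜 F (T ∘ₗ S)‖ ≤
      ∑ i ∈ Finset.range (min (finrank 𝕜 E) (finrank 𝕜 F)),
        T.singularValues i * S.singularValues i :=
  (norm_trace_comp_le_sum_singularOverlap T S).trans <|
    sum_mul_mul_le_of_substochastic T.singularValues_antitone S.singularValues_antitone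
      (fun _ => T.singularValues_of_finrank_le) (fun _ => S.singularValues_of_finrank_le)
      (fun i j => by rw [singularOverlap]; positivity)
      (sum_singularOverlap_le_one T S)
      (fun j => by simpa only [singularOverlap_swap T S] using sum_singularOverlap_le_one S T j)

end SingularVectors

section MatrixSingularValues

theorem comp_sort_rev_of_antitone {α : Type*} [LinearOrder α] {n : ℕ} {f : Fin n → α}
    (hf : Antitone f) (σ : Equiv.Perm (Fin n)) (i : Fin n) :
    ((f ∘ σ) ∘ Tuple.sort (f ∘ σ)) i.rev = f i := by
  have hmono : Monotone (f ∘ Fin.revPerm) := hf.comp Fin.rev_anti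
  rw [Tuple.comp_perm_comp_sort_eq_comp_sort, ← Tuple.comp_sort_eq_comp_iff_monotone.2 hmono]
  simp

theorem exists_perm_sqrt_eigenvalues_eq_singularValues {𝕜 m : Type*} [RCLike 𝕜] [Fintype m]
    {n : ℕ} (A : Matrix m (Fin n) 𝕜) :
    ∃ σ : Equiv.Perm (Fin n), ∀ j, √((isHermitian_conjTranspose_mul_self A).eigenvalues j) =
      A.toEuclideanLin.singularValues (σ j) := by
  classical
  have hgram : (Aᴴ * A).toEuclideanLin = A.toEuclideanLin.adjoint ∘ₗ A.toEuclideanLin := by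
    rw [← toEuclideanLin_conjTranspose_eq_adjoint, ← toLpLin_mul_same]
  refine ⟨(Fintype.equivOfCardEq (Fintype.card_fin _)).symm.trans (finCongr (Fintype.card_fin n)),
    fun j => ?_⟩
  simp only [IsHermitian.eigenvalues, IsHermitian.eigenvalues₀, hgram]
  exact (A.toEuclideanLin.singularValues_fin finrank_euclideanSpace _).symm

theorem singularValue_eq_singularValues {m n : ℕ} (A : Matrix (Fin m) (Fin n) ℝ)
    (i : Fin (min m n)) : singularValue A i = A.toEuclideanLin.singularValues i := by
  obtain ⟨σ, hσ⟩ := exists_perm_sqrt_eigenvalues_eq_singularValues A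
  have hanti : Antitone fun j : Fin n => A.toEuclideanLin.singularValues j :=
    fun _ _ hij => A.toEuclideanLin.singularValues_antitone hij
  have hperm : (fun j => √((isHermitian_conjTranspose_mul_self A).eigenvalues j)) =
      (fun j : Fin n => A.toEuclideanLin.singularValues j) ∘ σ := funext hσ
  rw [singularValue, hperm]
  exact comp_sort_rev_of_antitone hanti σ _

theorem trace_toEuclideanLin_comp {𝕜 m n : Type*} [RCLike 𝕜] [Fintype m] [Fintype n]
    [DecidableEq m] [DecidableEq n] (A : Matrix m n 𝕜) (B : Matrix n m 𝕜) :
    LinearMap.trace 𝕜 _ (A.toEuclideanLin ∘ₗ B.toEuclideanLin) = (A * B).trace := by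
  rw [← toLpLin_mul_same, toLpLin_eq_toLin, trace_toLin_eq]

end MatrixSingularValues

theorem stmt12_general {m n : ℕ} (A : Matrix (Fin m) (Fin n) ℝ) (B : Matrix (Fin n) (Fin m) ℝ) :
    |(A * B).trace| ≤
      ∑ i : Fin (min m n), singularValue A i * singularValue B (i.cast (min_comm m n)) := by
  have hbound := norm_trace_comp_le_sum_singularValues A.toEuclideanLin B.toEuclideanLin
  rw [trace_toEuclideanLin_comp, finrank_euclideanSpace_fin, finrank_euclideanSpace_fin,
    min_comm n m, ← Fin.sum_univ_eq_sum_range] at hbound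
  simpa only [singularValue_eq_singularValues, Fin.val_cast, Real.norm_eq_abs] using hbound

/-- Von Neumann's trace inequality: `tr(AB) ≤ ∑ᵢ σᵢ(A)·σᵢ(B)` for square real
matrices `A`, `B`, where the singular values are ordered non-increasingly. -/
theorem stmt12 (n : ℕ) (A B : Matrix (Fin n) (Fin n) ℝ) :
    Matrix.trace (A * B) ≤ ∑ i : Fin (min n n), singularValue A i * singularValue B i :=
  (le_abs_self _).trans (stmt12_general A B)
end
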